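/- arXiv:1904.08568 — 3 statements merged into one kernel-verified Lean document; each statement's English description precedes it below -/
import Mathlib

section
/- For every integer m ≥ 0 and every η ∈ (0,π), the function h_m satisfies the eigenfunction equation h_m''(η) + 6·cot(η)·h_m'(η) = −m(m+6)·h_m(η); that is, h_m is an eigenfunction of the radial Laplacian of the round sphere S^7 with eigenvalue −m(m+6). -/
open Real MeasureTheory Filter Topology

/-- Jacobi polynomial `P_k^{3,b}` (with `b = m+3` octonionic, `b = m+1` quaternionic),
given by the polynomial extension of the Rodrigues formula. -/
noncomputable def jacP (k b : ℕ) : Polynomial ℝ :=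
  Polynomial.C ((-1 : ℝ) ^ k / (2 ^ k * (Nat.factorial k : ℝ))) *
    (Polynomial.derivative^[k]
        ((1 - Polynomial.X) ^ (k + 3) * (1 + Polynomial.X) ^ (b + k)) /
      ((1 - Polynomial.X) ^ 3 * (1 + Polynomial.X) ^ b))

/-- Normalized eigenfunction `h_m` of the radial Laplacian on `S^7`. -/
noncomputable def hOct (m : ℕ) (η : ℝ) : ℝ :=
  (Real.Gamma (7 / 2) / (Real.sqrt π * Real.Gamma 3)) *
    ∫ φ in (0 : ℝ)..π,
      (((Real.cos η : ℂ) + Complex.I * ((Real.sin η * Real.cos φ : ℝ) : ℂ)) ^ m).re *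
        (Real.sin φ) ^ 5

/-- Coefficient `α_{k,m}`. -/
noncomputable def alphOct (k m : ℕ) : ℝ :=
  (96 / π ^ 8) * (m + 3) * (2 * k + m + 7) *
    (Nat.choose (k + m + 6) (k + m + 3)) * (Nat.choose (m + 5) m)

/-- Subelliptic heat kernel of the octonionic Hopf fibration, in cylindric coordinates. -/
noncomputable def pOct (t r η : ℝ) : ℝ :=
  ∑' m : ℕ, ∑' k : ℕ,
    alphOct k m * hOct m η * Real.exp (-(4 * ((k * (k + m + 7) + 2 * m : ℕ) : ℝ)) * t) *
      (Real.cos r) ^ m * (jacP k (m + 3)).eval (Real.cos (2 * r))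

/-- Coefficient `β_{k,m}` of the quaternionic heat kernel. -/
noncomputable def betQ (k m : ℕ) : ℝ :=
  (Real.Gamma 4 / (2 * π ^ 6)) * (2 * k + m + 5) * (m + 1) *
    (Nat.choose (k + m + 4) (k + m + 1))

/-- Subelliptic heat kernel of the quaternionic Hopf fibration on `S^11`. -/
noncomputable def pQuat (t r η : ℝ) : ℝ :=
  ∑' m : ℕ, ∑' k : ℕ,
    betQ k m * Real.exp (-(4 * ((k * (k + m + 5) + 2 * m : ℕ) : ℝ)) * t) *
      (Real.sin ((m + 1) * η) / Real.sin η) *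
      (Real.cos r) ^ m * (jacP k (m + 1)).eval (Real.cos (2 * r))

/-- Gegenbauer polynomial `C_m^5` (polynomial extension to all real `x`). -/
noncomputable def geg5 (m : ℕ) (x : ℝ) : ℝ :=
  ∑ j ∈ Finset.range (m / 2 + 1),
    (-1 : ℝ) ^ j * (Nat.factorial (m - j + 4)) /
      ((Nat.factorial 4) * (Nat.factorial j) * (Nat.factorial (m - 2 * j))) * (2 * x) ^ (m - 2 * j)

/-- Radial heat kernel of the round sphere `S^11`, as a function of `cos δ`. -/
noncomputable def qS11 (t x : ℝ) : ℝ :=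
  (Real.Gamma 5 / (2 * π ^ 6)) *
    ∑' m : ℕ, (m + 5) * Real.exp (-((m * (m + 10) : ℕ) : ℝ) * t) * geg5 m x

/-- The kernel `g_t(η,y)` appearing in the integral representation. -/
noncomputable def gInt (t η y : ℝ) : ℝ :=
  (Real.sin η)⁻¹ ^ 3 *
    (Real.cos (η * y / (2 * t)) * (2 * y) * (η - 3 * t * Real.cot η) +
      Real.sin (η * y / (2 * t)) *
        (8 * t ^ 2 * Real.cot η ^ 2 + 4 * t ^ 2 * ((Real.sin η)⁻¹) ^ 2 -
          6 * t * η * Real.cot η + 2 * t + η ^ 2 - y ^ 2))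

/-- Theta-type function `V(t,δ)`. -/
noncomputable def Vtheta (t δ : ℝ) : ℝ :=
  (1 / Real.sqrt (4 * π * t)) * ∑' k : ℤ, Real.exp (-(δ - 2 * k * π) ^ 2 / (4 * t))

/-- The operator `f ↦ -(1/(2π sin δ)) f'`. -/
noncomputable def Dop (f : ℝ → ℝ) : ℝ → ℝ :=
  fun δ => -(1 / (2 * π * Real.sin δ)) * deriv f δ


/-- Differentiation under the integral for jointly continuous data. -/
lemma aux_hasDerivAt_integral (f f' : ℝ → ℝ → ℂ) (hf : Continuous (Function.uncurry f))
    (hf' : Continuous (Function.uncurry f'))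
    (hd : ∀ x t, HasDerivAt (fun y => f y t) (f' x t) x) (x : ℝ) :
    HasDerivAt (fun y => ∫ t in (0 : ℝ)..π, f y t) (∫ t in (0 : ℝ)..π, f' x t) x := by
  obtain ⟨C, hC⟩ := ((isCompact_closedBall x 1).prod
    (isCompact_uIcc (a := (0 : ℝ)) (b := π))).exists_bound_of_continuousOn hf'.continuousOn
  have hs : ∀ y, Continuous (f y) := fun y => hf.comp (Continuous.prodMk_right y)
  have hs' : ∀ y, Continuous (f' y) := fun y => hf'.comp (Continuous.prodMk_right y)
  refine (intervalIntegral.hasDerivAt_integral_of_dominated_loc_of_deriv_le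
    (bound := fun _ => C) (Metric.ball_mem_nhds x one_pos) ?_ ?_ ?_ ?_ ?_ ?_).2
  · exact Eventually.of_forall fun y => (hs y).aestronglyMeasurable
  · exact (hs x).intervalIntegrable _ _
  · exact (hs' x).aestronglyMeasurable
  · refine Eventually.of_forall fun t ht y hy => ?_
    exact hC (y, t) ⟨Metric.ball_subset_closedBall hy, Set.uIoc_subset_uIcc ht⟩
  · exact intervalIntegrable_const
  · exact Eventually.of_forall fun t _ y _ => hd y t

lemma aux_slice {f : ℝ → ℝ → ℂ} (hf : Continuous (Function.uncurry f)) (x : ℝ) :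
    Continuous (f x) := hf.comp (Continuous.prodMk_right x)

/-- The base `cos η + i sin η cos φ`. -/
noncomputable def auxZ (η φ : ℝ) : ℂ :=
  (Real.cos η : ℂ) + Complex.I * ((Real.sin η * Real.cos φ : ℝ) : ℂ)

/-- Its `η`-derivative. -/
noncomputable def auxW (η φ : ℝ) : ℂ :=
  -(Real.sin η : ℂ) + Complex.I * ((Real.cos η * Real.cos φ : ℝ) : ℂ)

/-- Integrand and its first two `η`-derivatives. -/
noncomputable def auxF0 (m : ℕ) (η φ : ℝ) : ℂ := auxZ η φ ^ m * ((Real.sin φ ^ 5 : ℝ) : ℂ)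

/-- First derivative. -/
noncomputable def auxF1 (m : ℕ) (η φ : ℝ) : ℂ :=
  ((m : ℂ) * auxZ η φ ^ (m - 1) * auxW η φ) * ((Real.sin φ ^ 5 : ℝ) : ℂ)

/-- Second derivative. -/
noncomputable def auxF2 (m : ℕ) (η φ : ℝ) : ℂ :=
  ((m : ℂ) * (((m - 1 : ℕ) : ℂ) * auxZ η φ ^ (m - 1 - 1) * auxW η φ) * auxW η φ
    + (m : ℂ) * auxZ η φ ^ (m - 1) * (-auxZ η φ)) * ((Real.sin φ ^ 5 : ℝ) : ℂ)

lemma auxZ_cont : Continuous (Function.uncurry auxZ) := by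
  unfold auxZ Function.uncurry; fun_prop

lemma auxW_cont : Continuous (Function.uncurry auxW) := by
  unfold auxW Function.uncurry; fun_prop

lemma auxZ_deriv (η φ : ℝ) : HasDerivAt (fun y => auxZ y φ) (auxW η φ) η := by
  unfold auxZ auxW
  have h1 := (Real.hasDerivAt_cos η).ofReal_comp
  have h2 := (((Real.hasDerivAt_sin η).mul_const (Real.cos φ)).ofReal_comp).const_mul Complex.I
  refine (h1.add h2).congr_deriv ?_
  push_cast; ring

lemma auxW_deriv (η φ : ℝ) : HasDerivAt (fun y => auxW y φ) (-auxZ η φ) η := by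
  unfold auxZ auxW
  have h1 := (Real.hasDerivAt_sin η).ofReal_comp.neg
  have h2 := (((Real.hasDerivAt_cos η).mul_const (Real.cos φ)).ofReal_comp).const_mul Complex.I
  refine (h1.add h2).congr_deriv ?_
  push_cast; ring

lemma auxZ_deriv2 (η φ : ℝ) : HasDerivAt (fun y => auxZ η y)
    (-(Complex.I * (Real.sin η : ℂ) * (Real.sin φ : ℂ))) φ := by
  unfold auxZ
  have h2 := (((Real.hasDerivAt_cos φ).const_mul (Real.sin η)).ofReal_comp).const_mul Complex.I
  refine (h2.const_add (Real.cos η : ℂ)).congr_deriv ?_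
  push_cast; ring

lemma auxF0_cont (m : ℕ) : Continuous (Function.uncurry (auxF0 m)) := by
  have h := auxZ_cont
  unfold auxF0 Function.uncurry at *; fun_prop

lemma auxF1_cont (m : ℕ) : Continuous (Function.uncurry (auxF1 m)) := by
  have h := auxZ_cont
  have h' := auxW_cont
  unfold auxF1 Function.uncurry at *; fun_prop

lemma auxF2_cont (m : ℕ) : Continuous (Function.uncurry (auxF2 m)) := by
  have h := auxZ_cont
  have h' := auxW_cont
  unfold auxF2 Function.uncurry at *; fun_prop

lemma auxF0_deriv (m : ℕ) (η φ : ℝ) :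
    HasDerivAt (fun y => auxF0 m y φ) (auxF1 m η φ) η :=
  ((auxZ_deriv η φ).pow m).mul_const _

lemma auxF1_deriv (m : ℕ) (η φ : ℝ) :
    HasDerivAt (fun y => auxF1 m y φ) (auxF2 m η φ) η :=
  ((((auxZ_deriv η φ).pow (m - 1)).const_mul (m : ℂ)).mul (auxW_deriv η φ)).mul_const _

/-- Total `φ`-derivative identity. -/
lemma aux_total (m : ℕ) (η φ : ℝ) :
    HasDerivAt (fun y => Complex.I * (m : ℂ) * (auxZ η y ^ (m - 1) * ((Real.sin y : ℝ) : ℂ) ^ 6))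
      ((Real.sin η : ℂ) * auxF2 m η φ + 6 * (Real.cos η : ℂ) * auxF1 m η φ
        + (Real.sin η : ℂ) * ((m : ℂ) * (m + 6)) * auxF0 m η φ) φ := by
  have h := (((auxZ_deriv2 η φ).pow (m - 1)).mul
    ((Real.hasDerivAt_sin φ).ofReal_comp.pow 6)).const_mul (Complex.I * (m : ℂ))
  refine h.congr_deriv ?_
  have e1 : (Real.sin η : ℂ) ^ 2 = 1 - (Real.cos η : ℂ) ^ 2 := by
    rw [eq_sub_iff_add_eq]; exact_mod_cast Real.sin_sq_add_cos_sq η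
  have e2 : (Real.sin φ : ℂ) ^ 2 = 1 - (Real.cos φ : ℂ) ^ 2 := by
    rw [eq_sub_iff_add_eq]; exact_mod_cast Real.sin_sq_add_cos_sq φ
  have k1 : auxW η φ ^ 2 = (Real.sin φ : ℂ) ^ 2 - auxZ η φ ^ 2 := by
    rw [e2]; unfold auxW auxZ; push_cast
    push_cast at e1
    linear_combination (1 - Complex.cos φ ^ 2) * e1 +
      (Complex.cos φ ^ 2 * (Complex.cos η ^ 2 + Complex.sin η ^ 2)) * Complex.I_sq
  have k2 : (Real.cos η : ℂ) * auxW η φ + (Real.sin η : ℂ) * auxZ η φ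
      = Complex.I * (Real.cos φ : ℂ) := by
    unfold auxW auxZ; push_cast
    push_cast at e1
    linear_combination (Complex.I * Complex.cos φ) * e1
  unfold auxF0 auxF1 auxF2
  clear h
  simp only [Pi.pow_apply]
  generalize auxZ η φ = z at *
  generalize auxW η φ = w at *
  rcases m with _ | _ | k
  · simp
  · push_cast at *
    simp
    linear_combination (-6 * Complex.sin φ ^ 5) * k2
  · simp only [Nat.add_sub_cancel,
      show k + 1 + 1 - 1 = k + 1 from rfl]
    push_cast at *
    linear_combination (-6 * ((k : ℂ) + 2) * z ^ (k + 1) * Complex.sin φ ^ 5) * k2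
      - (((k : ℂ) + 2) * (k + 1) * z ^ k * Complex.sin η * Complex.sin φ ^ 5) * k1
      - (((k : ℂ) + 2) * (k + 1) * z ^ k * Complex.sin η * Complex.sin φ ^ 7) * Complex.I_sq

lemma aux_int_zero (m : ℕ) (η : ℝ) :
    (Real.sin η : ℂ) * (∫ t in (0 : ℝ)..π, auxF2 m η t)
      + 6 * (Real.cos η : ℂ) * (∫ t in (0 : ℝ)..π, auxF1 m η t)
      + (Real.sin η : ℂ) * ((m : ℂ) * (m + 6)) * (∫ t in (0 : ℝ)..π, auxF0 m η t) = 0 := by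
  have c0 : Continuous (auxF0 m η) := aux_slice (auxF0_cont m) η
  have c1 : Continuous (auxF1 m η) := aux_slice (auxF1_cont m) η
  have c2 : Continuous (auxF2 m η) := aux_slice (auxF2_cont m) η
  have h := intervalIntegral.integral_eq_sub_of_hasDerivAt (a := 0) (b := π)
    (fun φ _ => aux_total m η φ) (Continuous.intervalIntegrable (by fun_prop) _ _)
  rw [intervalIntegral.integral_add (Continuous.intervalIntegrable (by fun_prop) _ _)
      (Continuous.intervalIntegrable (by fun_prop) _ _),
    intervalIntegral.integral_add (Continuous.intervalIntegrable (by fun_prop) _ _)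
      (Continuous.intervalIntegrable (by fun_prop) _ _)] at h
  simp only [intervalIntegral.integral_const_mul] at h
  rw [h]; simp

lemma hOct_eq (m : ℕ) : hOct m = fun η =>
    (Real.Gamma (7 / 2) / (Real.sqrt π * Real.Gamma 3)) *
      (∫ t in (0 : ℝ)..π, auxF0 m η t).re := by
  funext η
  have c0 : Continuous (auxF0 m η) := aux_slice (auxF0_cont m) η
  have h := Complex.reCLM.intervalIntegral_comp_comm (c0.intervalIntegrable (μ := volume) 0 π)
  simp only [Complex.reCLM_apply] at h
  rw [← h]
  unfold hOct auxF0 auxZ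
  simp only [Complex.re_mul_ofReal]

lemma aux_re {g : ℝ → ℂ} {g' : ℂ} {x : ℝ} (h : HasDerivAt g g' x) :
    HasDerivAt (fun y => (g y).re) g'.re x :=
  Complex.reCLM.hasFDerivAt.comp_hasDerivAt x h

/-- For every integer `m ≥ 0` and `η ∈ (0,π)`, `h_m'' + 6 cot η · h_m' = -m(m+6) h_m`:
`h_m` is an eigenfunction of the radial Laplacian of `S^7` with eigenvalue `-m(m+6)`. -/
theorem hOct_eigenfunction (m : ℕ) (η : ℝ) (hη : η ∈ Set.Ioo 0 π) :
    deriv (deriv (hOct m)) η + 6 * Real.cot η * deriv (hOct m) η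
      = -((m : ℝ) * (m + 6)) * hOct m η := by
  have hs : Real.sin η ≠ 0 := (Real.sin_pos_of_mem_Ioo hη).ne'
  have d1 : deriv (hOct m) = fun η => (Real.Gamma (7 / 2) / (Real.sqrt π * Real.Gamma 3)) *
      (∫ t in (0 : ℝ)..π, auxF1 m η t).re := by
    funext x
    rw [hOct_eq]
    exact ((aux_re (aux_hasDerivAt_integral _ _ (auxF0_cont m) (auxF1_cont m)
      (auxF0_deriv m) x)).const_mul _).deriv
  have d2 : deriv (deriv (hOct m)) η = (Real.Gamma (7 / 2) / (Real.sqrt π * Real.Gamma 3)) *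
      (∫ t in (0 : ℝ)..π, auxF2 m η t).re := by
    rw [d1]
    exact ((aux_re (aux_hasDerivAt_integral _ _ (auxF1_cont m) (auxF2_cont m)
      (auxF1_deriv m) η)).const_mul _).deriv
  have key := congrArg Complex.re (aux_int_zero m η)
  rw [show (6 : ℂ) * (Real.cos η : ℂ) = ((6 * Real.cos η : ℝ) : ℂ) by push_cast; rfl,
    show (Real.sin η : ℂ) * ((m : ℂ) * (m + 6)) = ((Real.sin η * (m * (m + 6)) : ℝ) : ℂ) by
      push_cast; rfl, Complex.add_re, Complex.add_re, Complex.re_ofReal_mul,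
    Complex.re_ofReal_mul, Complex.re_ofReal_mul, Complex.zero_re] at key
  rw [d2, d1, hOct_eq, Real.cot_eq_cos_div_sin]
  field_simp
  linear_combination key
end

section
/- For all integers k, m ≥ 0, the function u(t,r,η) = e^{−4(k(k+m+7)+2m)t} (cos r)^m P_k^{3,m+3}(cos 2r) h_m(η) satisfies, for all t > 0, r ∈ (0,π/2), η ∈ (0,π), the heat equation ∂u/∂t = ∂²u/∂r² + (7·cot r − 7·tan r)·∂u/∂r + tan²r·(∂²u/∂η² + 6·cot η·∂u/∂η). In other words, (cos r)^m P_k^{3,m+3}(cos 2r) h_m(η) is an eigenfunction of the radial part of the sub-Laplacian of the octonionic Hopf fibration with eigenvalue −4(k(k+m+7)+2m). -/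
open Real MeasureTheory Filter Topology

/-- The separated function `u(t,r,η) = e^{-4(k(k+m+7)+2m)t} (cos r)^m P_k^{3,m+3}(cos 2r) h_m(η)`. -/
noncomputable def uEig (k m : ℕ) (t r η : ℝ) : ℝ :=
  Real.exp (-(4 * ((k * (k + m + 7) + 2 * m : ℕ) : ℝ)) * t) * (Real.cos r) ^ m *
    (jacP k (m + 3)).eval (Real.cos (2 * r)) * hOct m η


section Helpers

open Polynomial in
lemma aux_weight (a b : ℕ) :
    (1 - X ^ 2 : ℝ[X]) * derivative ((1 - X) ^ a * (1 + X) ^ b) =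
      (((b : ℝ[X]) - (a : ℝ[X])) - ((a : ℝ[X]) + (b : ℝ[X])) * X) * ((1 - X) ^ a * (1 + X) ^ b) := by
  have h1 : (1 - X : ℝ[X]) * derivative ((1 - X : ℝ[X]) ^ a) = -(a : ℝ[X]) * (1 - X) ^ a := by
    cases a with
    | zero => simp
    | succ n =>
      simp only [derivative_pow_succ, derivative_sub, derivative_one, derivative_X, map_add,
        map_natCast, map_one]
      push_cast
      ring
  have h2 : (1 + X : ℝ[X]) * derivative ((1 + X : ℝ[X]) ^ b) = (b : ℝ[X]) * (1 + X) ^ b := by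
    cases b with
    | zero => simp
    | succ n =>
      simp only [derivative_pow_succ, derivative_add, derivative_one, derivative_X, map_add,
        map_natCast, map_one]
      push_cast
      ring
  rw [derivative_mul]
  linear_combination (1 + X) * (1 + X) ^ b * h1 + (1 - X) * (1 - X) ^ a * h2

open Polynomial in
lemma aux_leibniz (W : ℝ[X]) (a c : ℝ)
    (h : (1 - X ^ 2 : ℝ[X]) * derivative W = (C a - C c * X) * W) (n : ℕ) :
    (1 - X ^ 2 : ℝ[X]) * derivative^[n + 2] W =
      (C a - C c * X + 2 * ((n : ℝ[X]) + 1) * X) * derivative^[n + 1] W +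
        ((n : ℝ[X]) * ((n : ℝ[X]) + 1) - ((n : ℝ[X]) + 1) * C c) * derivative^[n] W := by
  induction n with
  | zero =>
    have h' := congrArg derivative h
    simp only [derivative_mul, derivative_sub, derivative_one, derivative_X_pow, derivative_C,
      derivative_X] at h'
    simp only [Function.iterate_succ_apply', Function.iterate_zero_apply]
    simp [C_ofNat] at h' ⊢
    linear_combination h'
  | succ n ih =>
    have h' := congrArg derivative ih
    simp only [derivative_mul, derivative_sub, derivative_add, derivative_one, derivative_X_pow,
      derivative_C, derivative_X, derivative_natCast, derivative_ofNat] at h'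
    simp only [Function.iterate_succ_apply'] at h' ⊢
    simp [C_ofNat] at h' ⊢
    linear_combination h'

open Polynomial in
lemma aux_jacobi (k b : ℕ) :
    (1 - X ^ 2 : ℝ[X]) * derivative (derivative (jacP k b)) +
      (((b : ℝ[X]) - 3) - ((b : ℝ[X]) + 5) * X) * derivative (jacP k b) +
      ((k : ℝ[X]) * ((k : ℝ[X]) + (b : ℝ[X]) + 4)) * jacP k b = 0 := by
  set W : ℝ[X] := (1 - X) ^ (k + 3) * (1 + X) ^ (b + k) with hW
  set w : ℝ[X] := (1 - X) ^ 3 * (1 + X) ^ b with hw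
  have e1 : (1 - X : ℝ[X]) ≠ 0 := by
    intro h; simpa using congrArg (Polynomial.eval 0) h
  have e2 : (1 + X : ℝ[X]) ≠ 0 := by
    intro h; simpa using congrArg (Polynomial.eval 0) h
  have hw0 : w ≠ 0 := mul_ne_zero (pow_ne_zero _ e1) (pow_ne_zero _ e2)
  have hcop : IsCoprime (1 - X : ℝ[X]) (1 + X) := by
    refine ⟨C (1 / 2), C (1 / 2), ?_⟩
    rw [← mul_add, show (1 - X + (1 + X) : ℝ[X]) = C 2 by rw [C_ofNat]; ring, ← C_mul]
    norm_num
  have hdvd : w ∣ derivative^[k] W := by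
    refine (hcop.pow (m := 3) (n := b)).mul_dvd ?_ ?_
    · have := pow_sub_dvd_iterate_derivative_of_pow_dvd (p := W) (q := (1 - X : ℝ[X])) (n := k + 3) k
        (Dvd.intro _ rfl)
      simpa using this
    · have := pow_sub_dvd_iterate_derivative_of_pow_dvd (p := W) (q := (1 + X : ℝ[X])) (n := b + k) k
        (Dvd.intro_left _ rfl)
      simpa using this
  obtain ⟨y, hy⟩ := hdvd
  have hj : jacP k b = C ((-1 : ℝ) ^ k / (2 ^ k * (Nat.factorial k : ℝ))) * y := by
    unfold jacP
    rw [← hW, ← hw, hy, mul_div_cancel_left₀ _ hw0]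
  have key := aux_leibniz W (b - 3) (b + 3 + 2 * k) (by
    have := aux_weight (k + 3) (b + k)
    rw [← hW] at this
    rw [this]
    simp only [map_sub, map_add, map_mul, map_natCast, map_ofNat]
    push_cast
    ring) k
  simp only [Function.iterate_succ_apply', hy, map_sub, map_add, map_mul, map_natCast,
    map_ofNat, derivative_mul] at key
  have w1 := aux_weight 3 b
  rw [← hw] at w1
  have w2 := congrArg derivative w1
  simp only [derivative_mul, derivative_sub, derivative_add, derivative_one, derivative_X_pow,
      derivative_C, derivative_X, derivative_natCast, derivative_ofNat] at w2
  simp [C_ofNat] at w1 w2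
  have hyode : w * ((1 - X ^ 2 : ℝ[X]) * derivative (derivative y) +
      (((b : ℝ[X]) - 3) - ((b : ℝ[X]) + 5) * X) * derivative y +
      ((k : ℝ[X]) * ((k : ℝ[X]) + (b : ℝ[X]) + 4)) * y) = 0 := by
    linear_combination key - 2 * derivative y * w1 - y * w2
  have := (mul_eq_zero.mp hyode).resolve_left hw0
  rw [hj]
  simp only [derivative_mul, derivative_C, zero_mul, zero_add]
  linear_combination C ((-1 : ℝ) ^ k / (2 ^ k * (Nat.factorial k : ℝ))) * this

lemma aux_param (F F' : ℝ → ℝ → ℂ) (hF : Continuous (Function.uncurry F))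
    (hF' : Continuous (Function.uncurry F'))
    (hd : ∀ x t, HasDerivAt (fun x => F x t) (F' x t) x) (x₀ : ℝ) :
    HasDerivAt (fun x => ∫ t in (0 : ℝ)..π, F x t) (∫ t in (0 : ℝ)..π, F' x₀ t) x₀ := by
  have hK : IsCompact (Metric.closedBall x₀ 1 ×ˢ Set.uIcc (0 : ℝ) π) :=
    (isCompact_closedBall x₀ 1).prod isCompact_uIcc
  obtain ⟨B, hB⟩ := hK.exists_bound_of_continuousOn hF'.continuousOn
  have c1 : ∀ x, Continuous (F x) := fun x => hF.comp (Continuous.prodMk_right x)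
  have c2 : ∀ x, Continuous (F' x) := fun x => hF'.comp (Continuous.prodMk_right x)
  refine (intervalIntegral.hasDerivAt_integral_of_dominated_loc_of_deriv_le
    (bound := fun _ => B) (s := Metric.closedBall x₀ 1)
    (Metric.closedBall_mem_nhds x₀ one_pos) ?_ ?_ ?_ ?_ ?_ ?_).2
  · exact Filter.Eventually.of_forall fun x => (c1 x).aestronglyMeasurable
  · exact (c1 x₀).intervalIntegrable _ _
  · exact (c2 x₀).aestronglyMeasurable
  · exact Filter.Eventually.of_forall fun t ht x hx =>
      hB (x, t) ⟨hx, Set.uIoc_subset_uIcc ht⟩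
  · exact intervalIntegrable_const
  · exact Filter.Eventually.of_forall fun t _ x _ => hd x t

noncomputable def zF (η φ : ℝ) : ℂ := (Real.cos η : ℂ) + Complex.I * ((Real.sin η * Real.cos φ : ℝ) : ℂ)

noncomputable def zD (η φ : ℝ) : ℂ := -(Real.sin η : ℂ) + Complex.I * ((Real.cos η * Real.cos φ : ℝ) : ℂ)

lemma zF_deriv (η φ : ℝ) : HasDerivAt (fun x => zF x φ) (zD η φ) η := by
  have h1 := (Real.hasDerivAt_cos η).ofReal_comp
  have h2 := ((Real.hasDerivAt_sin η).mul_const (Real.cos φ)).ofReal_comp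
  refine HasDerivAt.congr_deriv (f := fun x => zF x φ) (h1.add (h2.const_mul Complex.I)) ?_
  simp [zD]

lemma zD_deriv (η φ : ℝ) : HasDerivAt (fun x => zD x φ) (-zF η φ) η := by
  have h1 := (Real.hasDerivAt_sin η).ofReal_comp.neg
  have h2 := ((Real.hasDerivAt_cos η).mul_const (Real.cos φ)).ofReal_comp
  refine HasDerivAt.congr_deriv (f := fun x => zD x φ) (h1.add (h2.const_mul Complex.I)) ?_
  simp [zF]
  ring

lemma zF_deriv_phi (η φ : ℝ) : HasDerivAt (fun x => zF η x)
    (-(Complex.I * Real.sin η * Real.sin φ)) φ := by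
  have h2 := ((Real.hasDerivAt_cos φ).const_mul (Real.sin η)).ofReal_comp
  refine HasDerivAt.congr_deriv (f := fun x => zF η x)
    ((h2.const_mul Complex.I).const_add (Real.cos η : ℂ)) ?_
  push_cast
  ring

lemma zF_cont : Continuous (Function.uncurry zF) := by
  unfold zF Function.uncurry
  fun_prop

lemma zD_cont : Continuous (Function.uncurry zD) := by
  unfold zD Function.uncurry
  fun_prop

noncomputable def g0 (m : ℕ) (η φ : ℝ) : ℂ := zF η φ ^ m * ((Real.sin φ : ℂ) ^ 5)
noncomputable def g1 (m : ℕ) (η φ : ℝ) : ℂ :=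
  (m * zF η φ ^ (m - 1) * zD η φ) * ((Real.sin φ : ℂ) ^ 5)
noncomputable def g2 (m : ℕ) (η φ : ℝ) : ℂ :=
  (m * ((m - 1 : ℕ) * zF η φ ^ (m - 1 - 1) * zD η φ) * zD η φ +
    m * zF η φ ^ (m - 1) * (-zF η φ)) * ((Real.sin φ : ℂ) ^ 5)

lemma sin5_cont : Continuous (fun p : ℝ × ℝ => ((Real.sin p.2 : ℂ) ^ 5)) := by fun_prop

lemma g0_cont (m : ℕ) : Continuous (Function.uncurry (g0 m)) :=
  (zF_cont.pow m).mul sin5_cont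
lemma g1_cont (m : ℕ) : Continuous (Function.uncurry (g1 m)) :=
  ((continuous_const.mul (zF_cont.pow _)).mul zD_cont).mul sin5_cont
lemma g2_cont (m : ℕ) : Continuous (Function.uncurry (g2 m)) :=
  (((continuous_const.mul ((continuous_const.mul (zF_cont.pow _)).mul zD_cont)).mul zD_cont).add
    ((continuous_const.mul (zF_cont.pow _)).mul zF_cont.neg)).mul sin5_cont

lemma g0_deriv (m : ℕ) (η φ : ℝ) : HasDerivAt (fun x => g0 m x φ) (g1 m η φ) η :=
  ((zF_deriv η φ).pow m).mul_const _

lemma g1_deriv (m : ℕ) (η φ : ℝ) : HasDerivAt (fun x => g1 m x φ) (g2 m η φ) η :=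
  ((((zF_deriv η φ).pow (m - 1)).const_mul (m : ℂ)).mul (zD_deriv η φ)).mul_const _

lemma g_identity (m : ℕ) (η φ : ℝ) (hs : Real.sin η ≠ 0) :
    g2 m η φ + 6 * (Real.cot η : ℂ) * g1 m η φ + m * (m + 6) * g0 m η φ =
      (Complex.I * m / Real.sin η) *
      (((m - 1 : ℕ) * zF η φ ^ (m - 1 - 1) * (-(Complex.I * Real.sin η * Real.sin φ))) *
          (Real.sin φ : ℂ) ^ 6 +
        zF η φ ^ (m - 1) * (6 * (Real.sin φ : ℂ) ^ 5 * Real.cos φ)) := by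
  have hs' : (Real.sin η : ℂ) ≠ 0 := by exact_mod_cast hs
  have hI : Complex.I ^ 2 = -1 := Complex.I_sq
  have p1 : (Real.sin η : ℂ) ^ 2 + (Real.cos η : ℂ) ^ 2 = 1 := by
    exact_mod_cast Real.sin_sq_add_cos_sq η
  have p2 : (Real.sin φ : ℂ) ^ 2 + (Real.cos φ : ℂ) ^ 2 = 1 := by
    exact_mod_cast Real.sin_sq_add_cos_sq φ
  have q1 : zD η φ ^ 2 = (Real.sin φ : ℂ) ^ 2 - zF η φ ^ 2 := by
    unfold zD zF
    push_cast at *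
    linear_combination (Complex.cos φ) ^ 2 * (Complex.cos η ^ 2 + Complex.sin η ^ 2) * hI
      + (1 - Complex.cos φ ^ 2) * p1 - p2
  have q2 : (Real.cos η : ℂ) * zD η φ = Complex.I * Real.cos φ - Real.sin η * zF η φ := by
    unfold zD zF
    push_cast at *
    linear_combination Complex.I * Complex.cos φ * p1
  have hc : (Real.cot η : ℂ) = Real.cos η / Real.sin η := by
    rw [Real.cot_eq_cos_div_sin]; push_cast; rfl
  unfold g0 g1 g2
  rw [hc]
  generalize zF η φ = z at *
  generalize zD η φ = d at *
  generalize (Real.sin η : ℂ) = s at *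
  generalize (Real.cos η : ℂ) = c at *
  generalize (Real.sin φ : ℂ) = sp at *
  generalize (Real.cos φ : ℂ) = cp at *
  obtain ⟨u, hu⟩ : ∃ u, u = s⁻¹ := ⟨_, rfl⟩
  have hsu : s * u = 1 := by rw [hu]; exact mul_inv_cancel₀ hs'
  simp only [div_eq_mul_inv, ← hu]
  rcases m with _ | _ | n
  · simp
  · simp
    linear_combination 6 * sp ^ 5 * (u * q2 - z * hsu)
  · simp only [Nat.add_sub_cancel]
    push_cast
    linear_combination ((n : ℂ) + 2) * (n + 1) * z ^ n * sp ^ 5 * q1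
      + 6 * ((n : ℂ) + 2) * z ^ (n + 1) * sp ^ 5 * (u * q2 - z * hsu)
      + ((n : ℂ) + 2) * (n + 1) * z ^ n * sp ^ 7 * (s * u * Complex.I_sq - hsu)

noncomputable def G0 (m : ℕ) (η : ℝ) : ℂ := ∫ φ in (0 : ℝ)..π, g0 m η φ
noncomputable def G1 (m : ℕ) (η : ℝ) : ℂ := ∫ φ in (0 : ℝ)..π, g1 m η φ
noncomputable def G2 (m : ℕ) (η : ℝ) : ℂ := ∫ φ in (0 : ℝ)..π, g2 m η φ

lemma G0_deriv (m : ℕ) (η : ℝ) : HasDerivAt (G0 m) (G1 m η) η :=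
  aux_param _ _ (g0_cont m) (g1_cont m) (g0_deriv m) η
lemma G1_deriv (m : ℕ) (η : ℝ) : HasDerivAt (G1 m) (G2 m η) η :=
  aux_param _ _ (g1_cont m) (g2_cont m) (g1_deriv m) η

lemma G_ode (m : ℕ) (η : ℝ) (hs : Real.sin η ≠ 0) :
    G2 m η + 6 * (Real.cot η : ℂ) * G1 m η + m * (m + 6) * G0 m η = 0 := by
  have i0 : IntervalIntegrable (g0 m η) volume 0 π :=
    ((g0_cont m).comp (Continuous.prodMk_right η)).intervalIntegrable _ _
  have i1 : IntervalIntegrable (g1 m η) volume 0 π :=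
    ((g1_cont m).comp (Continuous.prodMk_right η)).intervalIntegrable _ _
  have i2 : IntervalIntegrable (g2 m η) volume 0 π :=
    ((g2_cont m).comp (Continuous.prodMk_right η)).intervalIntegrable _ _
  unfold G0 G1 G2
  rw [← intervalIntegral.integral_const_mul, ← intervalIntegral.integral_const_mul,
    ← intervalIntegral.integral_add i2 (i1.const_mul _),
    ← intervalIntegral.integral_add (i2.add (i1.const_mul _)) (i0.const_mul _)]
  have hd : ∀ φ ∈ Set.uIcc (0 : ℝ) π, HasDerivAt
      (fun φ => (Complex.I * m / Real.sin η) * (zF η φ ^ (m - 1) * (Real.sin φ : ℂ) ^ 6))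
      (g2 m η φ + 6 * (Real.cot η : ℂ) * g1 m η φ + m * (m + 6) * g0 m η φ) φ := by
    intro φ _
    rw [g_identity m η φ hs]
    have hsin := (Real.hasDerivAt_sin φ).ofReal_comp.pow 6
    have := (((zF_deriv_phi η φ).pow (m - 1)).mul hsin).const_mul (Complex.I * m / Real.sin η)
    refine HasDerivAt.congr_deriv this ?_
    simp
  rw [intervalIntegral.integral_eq_sub_of_hasDerivAt hd
    ((i2.add (i1.const_mul _)).add (i0.const_mul _))]
  simp

lemma hOct_eq_s3 (m : ℕ) : ∃ c : ℝ, ∀ η, hOct m η = c * (G0 m η).re := by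
  refine ⟨Real.Gamma (7 / 2) / (Real.sqrt π * Real.Gamma 3), fun η => ?_⟩
  have i0 : IntervalIntegrable (g0 m η) volume 0 π :=
    ((g0_cont m).comp (Continuous.prodMk_right η)).intervalIntegrable _ _
  unfold hOct G0
  have := Complex.reCLM.intervalIntegral_comp_comm i0
  simp only [Complex.reCLM_apply] at this
  rw [← this]
  congr 1
  refine intervalIntegral.integral_congr fun φ _ => ?_
  simp only [g0, zF]
  rw [← Complex.ofReal_pow, Complex.re_mul_ofReal]

lemma hOct_ode (m : ℕ) : ∃ h1 h2 : ℝ → ℝ, (∀ η, HasDerivAt (hOct m) (h1 η) η) ∧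
    (∀ η, HasDerivAt h1 (h2 η) η) ∧
    ∀ η, Real.sin η ≠ 0 → h2 η + 6 * Real.cot η * h1 η = -(m * (m + 6)) * hOct m η := by
  obtain ⟨c, hc⟩ := hOct_eq_s3 m
  refine ⟨fun η => c * (G1 m η).re, fun η => c * (G2 m η).re, fun η => ?_, fun η => ?_, ?_⟩
  · rw [funext hc]
    exact (Complex.reCLM.hasFDerivAt.comp_hasDerivAt η (G0_deriv m η)).const_mul c
  · exact (Complex.reCLM.hasFDerivAt.comp_hasDerivAt η (G1_deriv m η)).const_mul c
  · intro η hs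
    have := congrArg Complex.re (G_ode m η hs)
    rw [show (6 * (Real.cot η : ℂ)) = ((6 * Real.cot η : ℝ) : ℂ) by push_cast; rfl,
      show ((m : ℂ) * (m + 6)) = ((m * (m + 6) : ℝ) : ℂ) by push_cast; rfl] at this
    simp only [Complex.add_re, Complex.re_ofReal_mul, Complex.zero_re] at this
    rw [hc]
    linear_combination c * this

lemma radial_ode (k m : ℕ) : ∃ f1 f2 : ℝ → ℝ,
    (∀ r, HasDerivAt (fun r => Real.cos r ^ m * (jacP k (m + 3)).eval (Real.cos (2 * r)))
      (f1 r) r) ∧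
    (∀ r, HasDerivAt f1 (f2 r) r) ∧
    ∀ r, Real.sin r ≠ 0 → Real.cos r ≠ 0 →
      f2 r + (7 * Real.cot r - 7 * Real.tan r) * f1 r
        - (m * (m + 6)) * Real.tan r ^ 2 *
          (Real.cos r ^ m * (jacP k (m + 3)).eval (Real.cos (2 * r))) =
      -(4 * (k * (k + m + 7) + 2 * m)) *
          (Real.cos r ^ m * (jacP k (m + 3)).eval (Real.cos (2 * r))) := by
  have hode := aux_jacobi k (m + 3)
  generalize jacP k (m + 3) = P at *
  have hc2 : ∀ r : ℝ, HasDerivAt (fun r => Real.cos (2 * r)) (-Real.sin (2 * r) * 2) r := fun r => by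
    have h2 : HasDerivAt (fun r : ℝ => 2 * r) 2 r := by
      simpa using (hasDerivAt_id r).const_mul (2 : ℝ)
    exact h2.cos
  have hs2 : ∀ r : ℝ, HasDerivAt (fun r => Real.sin (2 * r)) (Real.cos (2 * r) * 2) r := fun r => by
    have h2 : HasDerivAt (fun r : ℝ => 2 * r) 2 r := by
      simpa using (hasDerivAt_id r).const_mul (2 : ℝ)
    exact h2.sin
  have hP : ∀ (Q : Polynomial ℝ) (r : ℝ), HasDerivAt (fun r => Q.eval (Real.cos (2 * r)))
      (Q.derivative.eval (Real.cos (2 * r)) * (-Real.sin (2 * r) * 2)) r := fun Q r =>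
    HasDerivAt.comp (h₂ := fun x => Q.eval x) r (Q.hasDerivAt (Real.cos (2 * r))) (hc2 r)
  have hp : ∀ (n : ℕ) (r : ℝ), HasDerivAt (fun r => Real.cos r ^ n)
      (n * Real.cos r ^ (n - 1) * (-Real.sin r)) r := fun n r => (Real.hasDerivAt_cos r).pow n
  refine ⟨_, _, fun r => (hp m r).mul (hP P r), fun r =>
    (((((hp (m - 1) r).const_mul (m : ℝ)).mul (Real.hasDerivAt_sin r).neg).mul (hP P r)).add
      ((hp m r).mul ((hP P.derivative r).mul ((hs2 r).neg.mul_const 2)))), ?_⟩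
  intro r hs hc
  have e := congrArg (Polynomial.eval (Real.cos (2 * r))) hode
  simp at e
  have p1 : (m : ℝ) * Real.cos r ^ (m - 1) = m * Real.cos r ^ m / Real.cos r := by
    rcases m with _ | n
    · simp
    · field_simp; simp; ring
  have p2 : (m : ℝ) * ((m - 1 : ℕ) * Real.cos r ^ (m - 1 - 1)) =
      m * (m - 1) * Real.cos r ^ m / Real.cos r ^ 2 := by
    rcases m with _ | _ | n
    · simp
    · simp
    · field_simp; simp; ring
  simp only [Pi.neg_apply, Pi.mul_apply]
  rw [Real.tan_eq_sin_div_cos, Real.cot_eq_cos_div_sin]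
  generalize Polynomial.eval (Real.cos (2 * r)) P = y0 at *
  generalize Polynomial.eval (Real.cos (2 * r)) P.derivative = y1 at *
  generalize Polynomial.eval (Real.cos (2 * r)) P.derivative.derivative = y2 at *
  have t := Real.sin_sq_add_cos_sq r
  have Y2 : 4 * Real.sin (2 * r) ^ 2 = 4 * (1 - Real.cos (2 * r) ^ 2) := by
    linear_combination 4 * Real.sin_sq_add_cos_sq (2 * r)
  have hS := Real.sin_two_mul r
  have hC : Real.cos (2 * r) = 1 - 2 * Real.sin r ^ 2 := by
    rw [Real.cos_two_mul]; linear_combination 2 * t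
  generalize Real.sin (2 * r) = S2 at *
  generalize Real.cos (2 * r) = C2 at *
  have hu : Real.cos r * (Real.cos r)⁻¹ = 1 := mul_inv_cancel₀ hc
  have hv : Real.sin r * (Real.sin r)⁻¹ = 1 := mul_inv_cancel₀ hs
  simp only [div_eq_mul_inv, ← inv_pow] at p1 p2 ⊢
  generalize (Real.cos r)⁻¹ = u at *
  generalize (Real.sin r)⁻¹ = v at *
  generalize Real.cos r ^ (m - 1) = A1 at *
  generalize Real.cos r ^ (m - 1 - 1) = A2 at *
  generalize Real.cos r ^ m = Q at *
  generalize Real.cos r = c at *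
  generalize Real.sin r = s at *
  have Y0 : (m : ℝ) * (m - 1) * s ^ 2 * u ^ 2 - m * u * c - 7 * m * (c * v - s * u) * s * u
      - m * (m + 6) * s ^ 2 * u ^ 2 + 8 * m = 0 := by
    linear_combination -(m : ℝ) * hu - 7 * m * (c * u * hv + hu)
  have Y1 : 4 * (m : ℝ) * u * s * S2 - 4 * C2 - 14 * (c * v - s * u) * S2
      = 4 * (m - (m + 8) * C2) := by
    rw [hS, hC]
    linear_combination 8 * (m : ℝ) * s ^ 2 * hu - 28 * c ^ 2 * hv + 28 * s ^ 2 * hu - 28 * t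
  linear_combination s ^ 2 * y0 * p2
    + (-c * y0 + 4 * s * y1 * S2 - (7 * c * v - 7 * s * u) * s * y0) * p1
    + Q * y0 * Y0 + Q * y1 * Y1 + Q * y2 * Y2 + 4 * Q * e

end Helpers

/-- `u` satisfies the heat equation of the radial part of the sub-Laplacian of the octonionic
Hopf fibration; i.e. `(cos r)^m P_k^{3,m+3}(cos 2r) h_m(η)` is an eigenfunction of the radial
sub-Laplacian with eigenvalue `-4(k(k+m+7)+2m)`. -/
theorem uEig_heat_equation (k m : ℕ) (t r η : ℝ) (ht : 0 < t)
    (hr : r ∈ Set.Ioo 0 (π / 2)) (hη : η ∈ Set.Ioo 0 π) :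
    deriv (fun s => uEig k m s r η) t
      = deriv (deriv (fun ρ => uEig k m t ρ η)) r
        + (7 * Real.cot r - 7 * Real.tan r) * deriv (fun ρ => uEig k m t ρ η) r
        + Real.tan r ^ 2 *
            (deriv (deriv (fun θ => uEig k m t r θ)) η
              + 6 * Real.cot η * deriv (fun θ => uEig k m t r θ) η) := by
  obtain ⟨h1, h2, H1, H2, H3⟩ := hOct_ode m
  obtain ⟨f1, f2, F1, F2, F3⟩ := radial_ode k m
  have hsr : Real.sin r ≠ 0 := (Real.sin_pos_of_pos_of_lt_pi hr.1 (by linarith [hr.2, Real.pi_pos])).ne'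
  have hcr : Real.cos r ≠ 0 := (Real.cos_pos_of_mem_Ioo ⟨by linarith [hr.1, Real.pi_pos], hr.2⟩).ne'
  have hse : Real.sin η ≠ 0 := (Real.sin_pos_of_pos_of_lt_pi hη.1 hη.2).ne'
  have F3' := F3 r hsr hcr
  have H3' := H3 η hse
  set lam : ℝ := ((k * (k + m + 7) + 2 * m : ℕ) : ℝ) with hlam
  have hlam' : lam = k * (k + m + 7) + 2 * m := by rw [hlam]; push_cast; ring
  set f : ℝ → ℝ := fun r => Real.cos r ^ m * (jacP k (m + 3)).eval (Real.cos (2 * r)) with hf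
  have hu : ∀ t r η, uEig k m t r η = Real.exp (-(4 * lam) * t) * f r * hOct m η := by
    intro t r η; simp only [uEig, hf, hlam]; ring
  have dt : HasDerivAt (fun s => uEig k m s r η)
      (Real.exp (-(4 * lam) * t) * (-(4 * lam)) * f r * hOct m η) t := by
    simp only [hu]
    have h : HasDerivAt (fun s : ℝ => -(4 * lam) * s) (-(4 * lam)) t := by
      simpa using (hasDerivAt_id t).const_mul (-(4 * lam))
    exact (h.exp.mul_const _).mul_const _
  have dr : deriv (fun ρ => uEig k m t ρ η) =
      fun ρ => Real.exp (-(4 * lam) * t) * f1 ρ * hOct m η := by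
    funext ρ
    simp only [hu]
    exact (((F1 ρ).const_mul _).mul_const _).deriv
  have de : deriv (fun θ => uEig k m t r θ) =
      fun θ => Real.exp (-(4 * lam) * t) * f r * h1 θ := by
    funext θ
    simp only [hu]
    exact ((H1 θ).const_mul _).deriv
  rw [dt.deriv, dr, de, (((F2 r).const_mul _).mul_const _).deriv, ((H2 η).const_mul _).deriv]
  have F3'' : f2 r + (7 * Real.cot r - 7 * Real.tan r) * f1 r
        - (m * (m + 6)) * Real.tan r ^ 2 * f r = -(4 * lam) * f r := by
    rw [hlam']; exact F3'
  linear_combination (-Real.exp (-(4 * lam) * t) * hOct m η) * F3''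
    - Real.exp (-(4 * lam) * t) * f r * Real.tan r ^ 2 * H3'
end

section
/- For all t > 0 and δ ∈ (0,π), the two classical expressions for the radial heat kernel of the round sphere S^{11} agree: q_t(cos δ) = e^{25t}·D^5 V(t,δ), where D denotes the operator f ↦ −(1/(2π·sin δ))·∂f/∂δ applied five times and V(t,δ) = (1/√(4πt))·Σ_{k∈ℤ} e^{−(δ−2kπ)²/(4t)}. -/
open Real MeasureTheory Filter Topology

namespace Aux11

open Polynomial

/-- explicit term of the Chebyshev polynomial of the second kind -/
noncomputable def uterm (n j : ℕ) : ℝ[X] :=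
  C ((-1 : ℝ) ^ j * ((n - j).choose j : ℝ) * 2 ^ (n - 2 * j)) * X ^ (n - 2 * j)

lemma uterm_succ (n j : ℕ) :
    uterm (n + 2) (j + 1) = 2 * X * uterm (n + 1) (j + 1) - uterm n j := by
  unfold uterm
  have h2 : (2 : ℝ[X]) = C 2 := (map_ofNat C 2).symm
  rcases lt_or_ge n j with h | h
  · have e1 : (n + 2 - (j + 1)).choose (j + 1) = 0 := Nat.choose_eq_zero_of_lt (by omega)
    have e2 : (n + 1 - (j + 1)).choose (j + 1) = 0 := Nat.choose_eq_zero_of_lt (by omega)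
    have e3 : (n - j).choose j = 0 := Nat.choose_eq_zero_of_lt (by omega)
    simp only [e1, e2, e3, Nat.cast_zero, mul_zero, zero_mul, map_zero, sub_zero]
  · have e1 : n + 2 - (j + 1) = (n - j) + 1 := by omega
    have e2 : n + 1 - (j + 1) = n - j := by omega
    have e3 : n + 2 - 2 * (j + 1) = n - 2 * j := by omega
    rw [e1, e2, e3, Nat.choose_succ_succ, h2]
    rcases le_or_gt (2 * j + 1) n with h' | h'
    · have e4 : n - 2 * j = (n + 1 - 2 * (j + 1)) + 1 := by omega
      rw [e4]
      push_cast
      simp only [map_mul, map_add, map_pow, pow_succ]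
      simp only [map_neg, map_one]
      ring
    · have e5 : (n - j).choose (j + 1) = 0 := Nat.choose_eq_zero_of_lt (by omega)
      rw [e5]
      push_cast
      simp only [map_mul, map_add, map_pow, pow_succ]
      simp only [map_neg, map_one, map_zero]
      ring

lemma uterm_zero (n : ℕ) : uterm (n + 1) 0 = 2 * X * uterm n 0 := by
  unfold uterm
  have h2 : (2 : ℝ[X]) = C 2 := (map_ofNat C 2).symm
  rw [h2]
  simp [pow_succ]
  ring

lemma uterm_sum_rec (n N : ℕ) :
    ∑ j ∈ Finset.range (N + 1), uterm (n + 2) j =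
      2 * X * ∑ j ∈ Finset.range (N + 1), uterm (n + 1) j - ∑ j ∈ Finset.range N, uterm n j := by
  rw [Finset.sum_range_succ', Finset.sum_range_succ' (fun j => uterm (n + 1) j)]
  simp only [uterm_succ, uterm_zero (n + 1), Finset.sum_sub_distrib, Finset.mul_sum, mul_add]
  ring

lemma U_explicit (n : ℕ) : ∀ N, n + 1 ≤ N →
    ∑ j ∈ Finset.range N, uterm n j = Chebyshev.U ℝ n := by
  induction n using Nat.strong_induction_on with
  | _ n ih =>
    intro N hN
    obtain ⟨M, rfl⟩ : ∃ M, N = M + 1 := ⟨N - 1, by omega⟩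
    match n, ih, hN with
    | 0, _, _ =>
      rw [Finset.sum_range_succ']
      rw [Finset.sum_eq_zero]
      · simp [uterm]
      · intro j _
        simp [uterm]
    | 1, _, _ =>
      rw [Finset.sum_range_succ']
      rw [Finset.sum_eq_zero]
      · simp [uterm, show (C 2 : ℝ[X]) = 2 from map_ofNat C 2]
      · intro j _
        simp [uterm]
    | n + 2, ih, hN =>
      rw [uterm_sum_rec, ih (n + 1) (by omega) _ (by omega), ih n (by omega) _ (by omega)]
      push_cast
      rw [Chebyshev.U_add_two]

lemma coef_id (m j : ℕ) (h : 2 * j ≤ m) :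
    ((m + 4 - j).choose j : ℝ) * ((m + 4 - 2 * j).descFactorial 4 : ℝ) =
      (Nat.factorial (m - j + 4)) / ((Nat.factorial j) * (Nat.factorial (m - 2 * j))) := by
  have h1 : (m + 4 - j).choose j * j.factorial * (m + 4 - j - j).factorial =
      (m + 4 - j).factorial := Nat.choose_mul_factorial_mul_factorial (by omega)
  have h2 : (m + 4 - 2 * j - 4).factorial * (m + 4 - 2 * j).descFactorial 4 =
      (m + 4 - 2 * j).factorial := Nat.factorial_mul_descFactorial (by omega)
  rw [show m + 4 - j - j = m + 4 - 2 * j by omega, ← h2,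
    show m + 4 - 2 * j - 4 = m - 2 * j by omega] at h1
  rw [show m - j + 4 = m + 4 - j by omega, ← h1]
  have a := Nat.factorial_ne_zero j
  have b := Nat.factorial_ne_zero (m - 2 * j)
  push_cast
  field_simp

lemma U_deriv (m : ℕ) (x : ℝ) :
    (derivative^[4] (Chebyshev.U ℝ ((m + 4 : ℕ) : ℤ))).eval x = 384 * geg5 m x := by
  rw [← U_explicit (m + 4) (m + 5) le_rfl, iterate_derivative_sum, eval_finsetSum, geg5,
    Finset.mul_sum]
  symm
  apply Finset.sum_subset_zero_on_sdiff
  · intro j hj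
    simp only [Finset.mem_range] at *
    omega
  · intro j hj
    simp only [Finset.mem_sdiff, Finset.mem_range] at hj
    rw [uterm, iterate_derivative_C_mul, iterate_derivative_X_pow_eq_C_mul,
      Nat.descFactorial_eq_zero_iff_lt.2 (by omega)]
    simp
  · intro j hj
    simp only [Finset.mem_range] at hj
    have hj' : 2 * j ≤ m := by omega
    rw [uterm, iterate_derivative_C_mul, iterate_derivative_X_pow_eq_C_mul]
    simp only [eval_mul, eval_C, eval_pow, eval_X]
    have e := coef_id m j hj'
    rw [show m + 4 - 2 * j - 4 = m - 2 * j by omega,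
      show (-1 : ℝ) ^ j * ((m + 4 - j).choose j : ℝ) * 2 ^ (m + 4 - 2 * j) *
        (((m + 4 - 2 * j).descFactorial 4 : ℝ) * x ^ (m - 2 * j)) =
        (-1 : ℝ) ^ j * (((m + 4 - j).choose j : ℝ) * ((m + 4 - 2 * j).descFactorial 4 : ℝ)) *
        2 ^ (m + 4 - 2 * j) * x ^ (m - 2 * j) by ring, e,
      show m + 4 - 2 * j = (m - 2 * j) + 4 by omega, mul_pow, pow_add]
    have a := Nat.factorial_ne_zero j
    have b := Nat.factorial_ne_zero (m - 2 * j)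
    have c : (Nat.factorial 4 : ℝ) = 24 := by norm_num [Nat.factorial]
    rw [c]
    field_simp
    ring

lemma T_deriv (m : ℕ) (x : ℝ) :
    (derivative^[5] (Chebyshev.T ℝ ((m + 5 : ℕ) : ℤ))).eval x =
      (m + 5) * (384 * geg5 m x) := by
  rw [Function.iterate_succ_apply, Chebyshev.T_derivative_eq_U, ← U_deriv,
    show (((m + 5 : ℕ) : ℤ) : ℝ[X]) = C ((m : ℝ) + 5) by
      simp [show (C 5 : ℝ[X]) = 5 from map_ofNat C 5], iterate_derivative_C_mul,
    eval_mul, eval_C]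
  congr 4
  push_cast
  ring_nf

lemma T_deriv_zero (n : ℕ) (h : n < 5) (x : ℝ) :
    (derivative^[5] (Chebyshev.T ℝ (n : ℤ))).eval x = 0 := by
  rw [iterate_derivative_eq_zero]
  · simp
  · rw [Chebyshev.natDegree_T]
    simpa using h

lemma T_bound_nat (n : ℕ) : ∀ (k : ℕ) (x : ℝ), |x| ≤ 1 →
    |(derivative^[k] (Chebyshev.T ℝ (n : ℤ))).eval x| ≤ (3 + 2 * k : ℝ) ^ n := by
  induction n using Nat.strong_induction_on with
  | _ n ih =>
    intro k x hx
    match n, ih with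
    | 0, _ =>
      rcases k with _ | k
      · simp
      · simp [Function.iterate_succ_apply]
    | 1, _ =>
      rcases k with _ | _ | k
      · simp
        linarith
      · simp
        norm_num
      · simp [Function.iterate_succ_apply]
        positivity
    | n + 2, ih =>
      have hrec : derivative^[k] (Chebyshev.T ℝ ((n + 2 : ℕ) : ℤ)) =
          C 2 * (derivative^[k] (Chebyshev.T ℝ ((n + 1 : ℕ) : ℤ)) * X +
            k • derivative^[k - 1] (Chebyshev.T ℝ ((n + 1 : ℕ) : ℤ))) -
          derivative^[k] (Chebyshev.T ℝ (n : ℤ)) := by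
        rw [← iterate_derivative_mul_X, ← iterate_derivative_C_mul, ← iterate_derivative_sub]
        congr 1
        push_cast
        rw [Chebyshev.T_add_two]
        rw [show (C 2 : ℝ[X]) = 2 from map_ofNat C 2]
        ring
      have h1 := ih (n + 1) (by omega) k x hx
      have h2 := ih (n + 1) (by omega) (k - 1) x hx
      have h3 := ih n (by omega) k x hx
      have h2' : |(derivative^[k - 1] (Chebyshev.T ℝ ((n + 1 : ℕ) : ℤ))).eval x| ≤
          (3 + 2 * k : ℝ) ^ (n + 1) := by
        refine h2.trans (pow_le_pow_left₀ (by positivity) ?_ _)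
        have : ((k - 1 : ℕ) : ℝ) ≤ k := by exact_mod_cast Nat.sub_le k 1
        linarith
      rw [hrec]
      simp only [eval_sub, eval_mul, eval_add, eval_C, eval_X, nsmul_eq_mul, eval_natCast]
      generalize (derivative^[k] (Chebyshev.T ℝ ((n + 1 : ℕ) : ℤ))).eval x = a at *
      generalize (derivative^[k - 1] (Chebyshev.T ℝ ((n + 1 : ℕ) : ℤ))).eval x = b at *
      generalize (derivative^[k] (Chebyshev.T ℝ (n : ℤ))).eval x = c at *
      have hk : (0 : ℝ) ≤ k := by positivity
      calc |2 * (a * x + k * b) - c| ≤ |2 * (a * x + k * b)| + |c| := abs_sub _ _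
        _ ≤ 2 * (|a| * |x| + k * |b|) + |c| := by
          rw [abs_mul, abs_two]
          gcongr
          refine (abs_add_le _ _).trans ?_
          rw [abs_mul, abs_mul, abs_of_nonneg hk]
        _ ≤ 2 * ((3 + 2 * k : ℝ) ^ (n + 1) * 1 + k * (3 + 2 * k : ℝ) ^ (n + 1)) +
            (3 + 2 * k : ℝ) ^ n := by gcongr
        _ ≤ _ := by
          have : (0 : ℝ) ≤ (3 + 2 * k : ℝ) ^ n := by positivity
          have e : (3 + 2 * k : ℝ) ^ (n + 2) - (2 * ((3 + 2 * k : ℝ) ^ (n + 1) * 1 +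
            k * (3 + 2 * k : ℝ) ^ (n + 1)) + (3 + 2 * k : ℝ) ^ n) =
            (2 + 2 * k) * (3 + 2 * k : ℝ) ^ n := by ring
          have : 0 ≤ (2 + 2 * k) * (3 + 2 * k : ℝ) ^ n := by positivity
          linarith

lemma T_natAbs (n : ℤ) : Chebyshev.T ℝ n = Chebyshev.T ℝ (n.natAbs : ℤ) := by
  rcases Int.natAbs_eq n with h | h
  · rw [← h]
  · conv_lhs => rw [h, Chebyshev.T_neg]

lemma T_bound (n : ℤ) (k : ℕ) (x : ℝ) (hx : |x| ≤ 1) :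
    |(derivative^[k] (Chebyshev.T ℝ n)).eval x| ≤ (3 + 2 * k : ℝ) ^ n.natAbs := by
  rw [T_natAbs]
  exact T_bound_nat _ k x hx

lemma summable_nat (t : ℝ) (ht : 0 < t) (A : ℝ) (hA : 0 ≤ A) :
    Summable (fun n : ℕ => Real.exp (-t * (n : ℝ) ^ 2) * A ^ n) := by
  have h0 : Tendsto (fun n : ℕ => Real.exp (-t * n) * A) atTop (𝓝 (0 * A)) := by
    refine Tendsto.mul_const A (Real.tendsto_exp_atBot.comp ?_)
    exact tendsto_natCast_atTop_atTop.const_mul_atTop_of_neg (by linarith)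
  rw [zero_mul] at h0
  have h1 : ∀ᶠ n : ℕ in atTop, Real.exp (-t * n) * A < 1 / 2 :=
    h0.eventually_lt_const (by norm_num)
  refine Summable.of_norm_bounded_eventually_nat (g := fun n : ℕ => (1 / 2 : ℝ) ^ n)
    (summable_geometric_of_lt_one (by norm_num) (by norm_num)) ?_
  filter_upwards [h1] with n hn
  have : Real.exp (-t * (n : ℝ) ^ 2) * A ^ n = (Real.exp (-t * n) * A) ^ n := by
    rw [mul_pow, ← Real.exp_nat_mul]
    congr 2
    ring
  rw [this, norm_pow, Real.norm_of_nonneg (by positivity)]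
  exact pow_le_pow_left₀ (by positivity) hn.le n

lemma summable_int (t : ℝ) (ht : 0 < t) (A : ℝ) (hA : 0 ≤ A) :
    Summable (fun n : ℤ => Real.exp (-t * (n : ℝ) ^ 2) * A ^ n.natAbs) := by
  refine summable_int_iff_summable_nat_and_neg.2 ⟨?_, ?_⟩ <;>
  simpa using summable_nat t ht A hA

/-- termwise derivatives of the theta series in the variable `cos δ` -/
noncomputable def F (t : ℝ) (k : ℕ) (δ : ℝ) : ℝ :=
  ∑' n : ℤ, Real.exp (-t * (n : ℝ) ^ 2) *
    (derivative^[k] (Chebyshev.T ℝ n)).eval (Real.cos δ)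

lemma summable_F (t : ℝ) (ht : 0 < t) (k : ℕ) (δ : ℝ) :
    Summable (fun n : ℤ => Real.exp (-t * (n : ℝ) ^ 2) *
      (derivative^[k] (Chebyshev.T ℝ n)).eval (Real.cos δ)) := by
  refine Summable.of_norm_bounded (summable_int t ht (3 + 2 * k) (by positivity)) ?_
  intro n
  rw [norm_mul, Real.norm_of_nonneg (Real.exp_nonneg _), Real.norm_eq_abs]
  gcongr
  exact T_bound n k _ (Real.abs_cos_le_one _)

lemma hasDerivAt_F (t : ℝ) (ht : 0 < t) (k : ℕ) (δ : ℝ) :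
    HasDerivAt (F t k) (-Real.sin δ * F t (k + 1) δ) δ := by
  have := hasDerivAt_tsum (𝕜 := ℝ) (y₀ := 0)
    (g := fun (n : ℤ) δ => Real.exp (-t * (n : ℝ) ^ 2) *
      (derivative^[k] (Chebyshev.T ℝ n)).eval (Real.cos δ))
    (g' := fun (n : ℤ) δ => -Real.sin δ * (Real.exp (-t * (n : ℝ) ^ 2) *
      (derivative^[k + 1] (Chebyshev.T ℝ n)).eval (Real.cos δ)))
    (summable_int t ht (3 + 2 * (k + 1 : ℕ)) (by positivity)) ?_ ?_ (summable_F t ht k 0) δ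
  · rw [tsum_mul_left] at this
    exact this
  · intro n y
    have h := ((derivative^[k] (Chebyshev.T ℝ n)).hasDerivAt (Real.cos y)).comp y
      (Real.hasDerivAt_cos y)
    have h' := h.const_mul (Real.exp (-t * (n : ℝ) ^ 2))
    rw [← Function.iterate_succ_apply' derivative] at h'
    refine h'.congr_deriv ?_
    ring
  · intro n y
    rw [norm_mul, norm_mul, Real.norm_of_nonneg (Real.exp_nonneg _), Real.norm_eq_abs,
      Real.norm_eq_abs, abs_neg]
    have h1 := Real.abs_sin_le_one y
    have h2 := T_bound n (k + 1) _ (Real.abs_cos_le_one y)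
    calc _ ≤ 1 * (Real.exp (-t * (n : ℝ) ^ 2) * (3 + 2 * (k + 1 : ℕ) : ℝ) ^ n.natAbs) := by
          gcongr
      _ = _ := one_mul _

lemma re_aux (r s : ℝ) : ((r : ℂ) + (s : ℂ) * Complex.I).re = r := by simp

lemma im_aux (r s : ℝ) : ((r : ℂ) + (s : ℂ) * Complex.I).im = s := by simp

lemma Vtheta_eq (t : ℝ) (ht : 0 < t) (δ : ℝ) : Vtheta t δ = 1 / (2 * π) * F t 0 δ := by
  have hpi := Real.pi_pos
  have key := Complex.tsum_exp_neg_quadratic (a := ((t / π : ℝ) : ℂ))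
    (by rw [Complex.ofReal_re]; positivity) (((δ / (2 * π) : ℝ) : ℂ) * Complex.I)
  have hpc : (π : ℂ) ≠ 0 := by exact_mod_cast hpi.ne'
  have htc : (t : ℂ) ≠ 0 := by exact_mod_cast ht.ne'
  have hR : ∀ n : ℤ, Complex.exp (-π / ((t / π : ℝ) : ℂ) *
      (n + Complex.I * (((δ / (2 * π) : ℝ) : ℂ) * Complex.I)) ^ 2) =
      ((Real.exp (-(δ - 2 * n * π) ^ 2 / (4 * t)) : ℝ) : ℂ) := by
    intro n
    rw [show Complex.I * (((δ / (2 * π) : ℝ) : ℂ) * Complex.I) = -((δ / (2 * π) : ℝ) : ℂ) by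
      linear_combination ((δ / (2 * π) : ℝ) : ℂ) * Complex.I_mul_I]
    push_cast
    congr 1
    field_simp
    ring
  have hA : ((t / π : ℝ) : ℂ) ^ (1 / 2 : ℂ) = ((Real.sqrt (t / π) : ℝ) : ℂ) := by
    rw [Real.sqrt_eq_rpow, Complex.ofReal_cpow (by positivity)]
    norm_num
  simp_rw [hR] at key
  rw [hA, ← Complex.ofReal_tsum] at key
  have hsum : Summable (fun n : ℤ => Complex.exp (-π * ((t / π : ℝ) : ℂ) * n ^ 2 +
      2 * π * (((δ / (2 * π) : ℝ) : ℂ) * Complex.I) * n)) := by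
    refine Summable.of_norm_bounded (summable_int t ht 1 (by norm_num)) ?_
    intro n
    rw [Complex.norm_exp]
    simp only [one_pow, mul_one]
    apply le_of_eq
    congr 1
    rw [show -π * ((t / π : ℝ) : ℂ) * n ^ 2 + 2 * π * (((δ / (2 * π) : ℝ) : ℂ) * Complex.I) * n =
      ((-t * n ^ 2 : ℝ) : ℂ) + ((n * δ : ℝ) : ℂ) * Complex.I by
        push_cast
        field_simp]
    exact re_aux _ _
  have hre := congrArg Complex.re key
  rw [Complex.re_tsum hsum] at hre
  have hL : ∀ n : ℤ, (Complex.exp (-π * ((t / π : ℝ) : ℂ) * n ^ 2 +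
      2 * π * (((δ / (2 * π) : ℝ) : ℂ) * Complex.I) * n)).re =
      Real.exp (-t * (n : ℝ) ^ 2) * (derivative^[0] (Chebyshev.T ℝ n)).eval (Real.cos δ) := by
    intro n
    rw [show -π * ((t / π : ℝ) : ℂ) * n ^ 2 + 2 * π * (((δ / (2 * π) : ℝ) : ℂ) * Complex.I) * n =
      ((-t * n ^ 2 : ℝ) : ℂ) + ((n * δ : ℝ) : ℂ) * Complex.I by
        push_cast
        field_simp]
    rw [Complex.exp_re, re_aux, im_aux]
    simp [Chebyshev.T_real_cos]
  simp_rw [hL] at hre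
  have hF : F t 0 δ = 1 / Real.sqrt (t / π) *
      ∑' k : ℤ, Real.exp (-(δ - 2 * k * π) ^ 2 / (4 * t)) := by
    rw [F, hre, ← Complex.ofReal_one, ← Complex.ofReal_div, ← Complex.ofReal_mul,
      Complex.ofReal_re]
  rw [hF, Vtheta, ← mul_assoc]
  congr 1
  rw [show 4 * π * t = (2 * π) ^ 2 * (t / π) by field_simp; ring,
    Real.sqrt_mul (by positivity), Real.sqrt_sq (by positivity)]
  field_simp

lemma Dop_iter (t : ℝ) (ht : 0 < t) (k : ℕ) : ∀ δ ∈ Set.Ioo 0 π,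
    (Dop^[k] (Vtheta t)) δ = (1 / (2 * π)) ^ (k + 1) * F t k δ := by
  induction k with
  | zero =>
    intro δ _
    simpa using Vtheta_eq t ht δ
  | succ k ih =>
    intro δ hδ
    rw [Function.iterate_succ_apply', Dop]
    have he : Dop^[k] (Vtheta t) =ᶠ[𝓝 δ] fun δ => (1 / (2 * π)) ^ (k + 1) * F t k δ := by
      filter_upwards [isOpen_Ioo.mem_nhds hδ] with y hy using ih y hy
    rw [he.deriv_eq, ((hasDerivAt_F t ht k δ).const_mul _).deriv]
    have hs : Real.sin δ ≠ 0 := (Real.sin_pos_of_mem_Ioo hδ).ne'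
    have hpi := Real.pi_ne_zero
    rw [pow_succ (1 / (2 * π)) (k + 1)]
    field_simp

lemma F_five (t : ℝ) (ht : 0 < t) (δ : ℝ) :
    F t 5 δ = 2 * ∑' m : ℕ, Real.exp (-t * ((m : ℝ) + 5) ^ 2) *
      ((m + 5) * (384 * geg5 m (Real.cos δ))) := by
  have hs := summable_F t ht 5 δ
  have hnat := (summable_int_iff_summable_nat_and_neg.1 hs).1
  rw [F, tsum_int_eq_zero_add_two_mul_tsum_pnat ?_ hs]
  · have h0 := T_deriv_zero 0 (by norm_num) (Real.cos δ)
    have e := tsum_pnat_eq_tsum_of_eq_zero (f := fun n : ℕ => Real.exp (-t * ((n : ℤ) : ℝ) ^ 2) *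
      (derivative^[5] (Chebyshev.T ℝ (n : ℤ))).eval (Real.cos δ)) (by simp only [h0, mul_zero])
    have e2 := hnat.sum_add_tsum_nat_add 5
    rw [Finset.sum_eq_zero, zero_add] at e2
    · have h0' : (derivative^[5] (Chebyshev.T ℝ 0)).eval (Real.cos δ) = 0 := h0
      rw [h0', mul_zero, zero_add, two_nsmul, ← two_mul]
      congr 1
      refine Eq.trans e (e2.symm.trans (tsum_congr fun m => ?_))
      rw [T_deriv]
      push_cast
      rfl
    · intro n hn
      rw [T_deriv_zero n (Finset.mem_range.1 hn), mul_zero]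
  · intro n
    simp [Chebyshev.T_neg]

end Aux11

/-- The two classical expressions for the radial heat kernel of the round sphere `S^11` agree:
`q_t(cos δ) = e^{25t} D⁵ V(t,δ)` where `D = f ↦ −(1/(2π sin δ)) ∂f/∂δ` and
`V(t,δ) = (1/√(4πt)) Σ_{k∈ℤ} e^{−(δ−2kπ)²/(4t)}`. -/
theorem qS11_eq_Dop_Vtheta (t δ : ℝ) (ht : 0 < t) (hδ : δ ∈ Set.Ioo 0 π) :
    qS11 t (Real.cos δ) = Real.exp (25 * t) * (Dop^[5] (Vtheta t)) δ := by
  rw [Aux11.Dop_iter t ht 5 δ hδ, Aux11.F_five t ht δ, qS11]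
  have hG : Real.Gamma 5 = 24 := by
    rw [show (5 : ℝ) = ((4 : ℕ) : ℝ) + 1 by norm_num, Real.Gamma_nat_eq_factorial]
    norm_num [Nat.factorial]
  have hterm : ∀ m : ℕ, Real.exp (-t * ((m : ℝ) + 5) ^ 2) *
      ((m + 5) * (384 * geg5 m (Real.cos δ))) = (384 * Real.exp (-(25 * t))) *
      ((m + 5) * Real.exp (-((m * (m + 10) : ℕ) : ℝ) * t) * geg5 m (Real.cos δ)) := by
    intro m
    rw [show -t * ((m : ℝ) + 5) ^ 2 = -(25 * t) + -((m * (m + 10) : ℕ) : ℝ) * t by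
      push_cast
      ring, Real.exp_add]
    ring
  simp_rw [hterm]
  rw [tsum_mul_left, hG, Real.exp_neg, div_pow, one_pow]
  have hpi := Real.pi_ne_zero
  have he := (Real.exp_pos (25 * t)).ne'
  generalize (∑' m : ℕ, ((m : ℝ) + 5) * Real.exp (-((m * (m + 10) : ℕ) : ℝ) * t) *
    geg5 m (Real.cos δ)) = S
  field_simp
  ring
end
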